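/- Let (M, ⊗, I, α, λ, ρ) be a right skew monoidal category and (A, ⊙, a², a⁰) an oplax right M-actegory. Then the endofunctor G := (−) ⊙ I : A ⥤ A carries a comonad structure with counit ε_x := a⁰_x : x ⊙ I ⟶ x and comultiplication δ_x := (id_x ⊙ λ_I) ≫ a²_{x,I,I} : x ⊙ I ⟶ (x ⊙ I) ⊙ I; that is, δ and ε are natural transformations and satisfy the coassociativity and the two counit laws of a comonad on A. -/

import Mathlib

open CategoryTheory

universe v₁ v₂ v₃ v₄ u₁ u₂ u₃ u₄

/-- A right skew monoidal structure on a category `M`: a tensor product bifunctor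
(encoded by its action `t` on objects and `tmap` on morphisms, with functoriality),
a unit object `I`, and natural families `assoc`, `lunit`, `runit` (not required to be
invertible) satisfying the five axioms (SKM1)–(SKM5). -/
structure RightSkewMonoidal (M : Type u₁) [Category.{v₁} M] where
  t : M → M → M
  tmap : ∀ {X X' Y Y' : M}, (X ⟶ X') → (Y ⟶ Y') → (t X Y ⟶ t X' Y')
  tmap_id : ∀ X Y : M, tmap (𝟙 X) (𝟙 Y) = 𝟙 (t X Y)
  tmap_comp : ∀ {X X' X'' Y Y' Y'' : M}
    (f : X ⟶ X') (f' : X' ⟶ X'') (g : Y ⟶ Y') (g' : Y' ⟶ Y''),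
    tmap (f ≫ f') (g ≫ g') = tmap f g ≫ tmap f' g'
  I : M
  assoc : ∀ X Y Z : M, t X (t Y Z) ⟶ t (t X Y) Z
  lunit : ∀ X : M, X ⟶ t I X
  runit : ∀ X : M, t X I ⟶ X
  assoc_natural : ∀ {X X' Y Y' Z Z' : M} (f : X ⟶ X') (g : Y ⟶ Y') (h : Z ⟶ Z'),
    tmap f (tmap g h) ≫ assoc X' Y' Z' = assoc X Y Z ≫ tmap (tmap f g) h
  lunit_natural : ∀ {X X' : M} (f : X ⟶ X'), f ≫ lunit X' = lunit X ≫ tmap (𝟙 I) f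
  runit_natural : ∀ {X X' : M} (f : X ⟶ X'), tmap f (𝟙 I) ≫ runit X' = runit X ≫ f
  skm1 : ∀ X Y Z W : M,
    assoc X Y (t Z W) ≫ assoc (t X Y) Z W =
      tmap (𝟙 X) (assoc Y Z W) ≫ assoc X (t Y Z) W ≫ tmap (assoc X Y Z) (𝟙 W)
  skm2 : ∀ X Y : M,
    tmap (𝟙 X) (lunit Y) ≫ assoc X I Y ≫ tmap (runit X) (𝟙 Y) = 𝟙 (t X Y)
  skm3 : ∀ X Y : M, lunit (t X Y) ≫ assoc I X Y = tmap (lunit X) (𝟙 Y)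
  skm4 : ∀ X Y : M, assoc X Y I ≫ runit (t X Y) = tmap (𝟙 X) (runit Y)
  skm5 : lunit I ≫ runit I = 𝟙 I

/-- `(C, C2, C0)` is an opmonoidal functor between the right skew monoidal categories
`(M, S)` and `(N, S')`: `C2` is a natural family and the axioms (OM1)–(OM3) hold. -/
structure IsOpmonoidalFunctor {M : Type u₁} [Category.{v₁} M] {N : Type u₂} [Category.{v₂} N]
    (S : RightSkewMonoidal M) (S' : RightSkewMonoidal N)
    (C : M ⥤ N)
    (C2 : ∀ m n : M, C.obj (S.t m n) ⟶ S'.t (C.obj m) (C.obj n))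
    (C0 : C.obj S.I ⟶ S'.I) : Prop where
  C2_natural : ∀ {m m' n n' : M} (f : m ⟶ m') (g : n ⟶ n'),
    C.map (S.tmap f g) ≫ C2 m' n' = C2 m n ≫ S'.tmap (C.map f) (C.map g)
  om1 : ∀ m n p : M,
    C.map (S.assoc m n p) ≫ C2 (S.t m n) p ≫ S'.tmap (C2 m n) (𝟙 (C.obj p)) =
      C2 m (S.t n p) ≫ S'.tmap (𝟙 (C.obj m)) (C2 n p) ≫
        S'.assoc (C.obj m) (C.obj n) (C.obj p)
  om2 : ∀ m : M,
    C2 m S.I ≫ S'.tmap (𝟙 (C.obj m)) C0 ≫ S'.runit (C.obj m) = C.map (S.runit m)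
  om3 : ∀ m : M,
    C.map (S.lunit m) ≫ C2 S.I m ≫ S'.tmap C0 (𝟙 (C.obj m)) = S'.lunit (C.obj m)

/-- `(act, actmap, a2, a0)` is an oplax right actegory over the right skew monoidal
category `(M, S)`: `act`/`actmap` form a bifunctor, `a2` and `a0` are natural families,
and the axioms (OLA1)–(OLA3) hold. -/
structure IsOplaxRightActegory {M : Type u₁} [Category.{v₁} M] (S : RightSkewMonoidal M)
    {A : Type u₂} [Category.{v₂} A]
    (act : A → M → A)
    (actmap : ∀ {x x' : A} {m m' : M}, (x ⟶ x') → (m ⟶ m') → (act x m ⟶ act x' m'))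
    (a2 : ∀ (x : A) (m n : M), act x (S.t m n) ⟶ act (act x m) n)
    (a0 : ∀ x : A, act x S.I ⟶ x) : Prop where
  actmap_id : ∀ (x : A) (m : M), actmap (𝟙 x) (𝟙 m) = 𝟙 (act x m)
  actmap_comp : ∀ {x x' x'' : A} {m m' m'' : M}
    (f : x ⟶ x') (f' : x' ⟶ x'') (g : m ⟶ m') (g' : m' ⟶ m''),
    actmap (f ≫ f') (g ≫ g') = actmap f g ≫ actmap f' g'
  a2_natural : ∀ {x x' : A} {m m' n n' : M} (f : x ⟶ x') (g : m ⟶ m') (h : n ⟶ n'),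
    actmap f (S.tmap g h) ≫ a2 x' m' n' = a2 x m n ≫ actmap (actmap f g) h
  a0_natural : ∀ {x x' : A} (f : x ⟶ x'), actmap f (𝟙 S.I) ≫ a0 x' = a0 x ≫ f
  ola1 : ∀ (x : A) (m n p : M),
    a2 x m (S.t n p) ≫ a2 (act x m) n p =
      actmap (𝟙 x) (S.assoc m n p) ≫ a2 x (S.t m n) p ≫ actmap (a2 x m n) (𝟙 p)
  ola2 : ∀ (x : A) (m : M), a2 x m S.I ≫ a0 (act x m) = actmap (𝟙 x) (S.runit m)
  ola3 : ∀ (x : A) (m : M),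
    actmap (𝟙 x) (S.lunit m) ≫ a2 x S.I m ≫ actmap (a0 x) (𝟙 m) = 𝟙 (act x m)

/-- For an oplax right actegory `(A, ⊙, a², a⁰)` over a right skew monoidal category
`(M, S)`, the endofunctor `(−) ⊙ I` of `A` (whose action on a morphism `f` is
`actmap f (𝟙 I)`) carries a comonad structure, with counit `ε_x := a⁰_x` and
comultiplication `δ_x := (𝟙 x ⊙ λ_I) ≫ a²_{x,I,I}`: both are natural, `δ` is
coassociative, and the two counit laws hold. -/
theorem actOnUnit_comonad {M : Type u₁} [Category.{v₁} M] (S : RightSkewMonoidal M)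
    {A : Type u₂} [Category.{v₂} A]
    (act : A → M → A)
    (actmap : ∀ {x x' : A} {m m' : M}, (x ⟶ x') → (m ⟶ m') → (act x m ⟶ act x' m'))
    (a2 : ∀ (x : A) (m n : M), act x (S.t m n) ⟶ act (act x m) n)
    (a0 : ∀ x : A, act x S.I ⟶ x)
    (hA : IsOplaxRightActegory S act actmap a2 a0)
    (δ : ∀ x : A, act x S.I ⟶ act (act x S.I) S.I)
    (hδ : ∀ x : A, δ x = actmap (𝟙 x) (S.lunit S.I) ≫ a2 x S.I S.I) :
    -- naturality of the counit `ε := a0`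
    (∀ {x x' : A} (f : x ⟶ x'), actmap f (𝟙 S.I) ≫ a0 x' = a0 x ≫ f) ∧
    -- naturality of the comultiplication `δ`
    (∀ {x x' : A} (f : x ⟶ x'),
      actmap f (𝟙 S.I) ≫ δ x' = δ x ≫ actmap (actmap f (𝟙 S.I)) (𝟙 S.I)) ∧
    -- coassociativity
    (∀ x : A, δ x ≫ δ (act x S.I) = δ x ≫ actmap (δ x) (𝟙 S.I)) ∧
    -- the two counit laws
    (∀ x : A, δ x ≫ a0 (act x S.I) = 𝟙 (act x S.I)) ∧
    (∀ x : A, δ x ≫ actmap (a0 x) (𝟙 S.I) = 𝟙 (act x S.I)) := by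
  have c1 : ∀ (x : A) {m m' m'' : M} (g : m ⟶ m') (g' : m' ⟶ m''),
      actmap (𝟙 x) g ≫ actmap (𝟙 x) g' = actmap (𝟙 x) (g ≫ g') := by
    intro x m m' m'' g g'
    rw [← hA.actmap_comp, Category.comp_id]
  refine ⟨fun f => hA.a0_natural f, ?_, ?_, ?_, ?_⟩
  · intro x x' f
    rw [hδ, hδ, Category.assoc, ← hA.a2_natural, S.tmap_id, ← Category.assoc, ← Category.assoc,
      ← hA.actmap_comp, ← hA.actmap_comp]
    simp only [Category.comp_id, Category.id_comp]
  · intro x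
    have hl : S.lunit S.I ≫ S.tmap (𝟙 S.I) (S.lunit S.I) ≫ S.assoc S.I S.I S.I =
        S.lunit S.I ≫ S.tmap (S.lunit S.I) (𝟙 S.I) := by
      rw [← Category.assoc, ← S.lunit_natural, Category.assoc, S.skm3]
    have n1 : a2 x S.I S.I ≫ actmap (𝟙 (act x S.I)) (S.lunit S.I) =
        actmap (𝟙 x) (S.tmap (𝟙 S.I) (S.lunit S.I)) ≫ a2 x S.I (S.t S.I S.I) := by
      rw [hA.a2_natural, hA.actmap_id]
    have n2 : actmap (actmap (𝟙 x) (S.lunit S.I) ≫ a2 x S.I S.I) (𝟙 S.I) =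
        actmap (actmap (𝟙 x) (S.lunit S.I)) (𝟙 S.I) ≫ actmap (a2 x S.I S.I) (𝟙 S.I) := by
      rw [← hA.actmap_comp, Category.comp_id]
    calc δ x ≫ δ (act x S.I)
        = actmap (𝟙 x) (S.lunit S.I) ≫
            (a2 x S.I S.I ≫ actmap (𝟙 (act x S.I)) (S.lunit S.I)) ≫
            a2 (act x S.I) S.I S.I := by
          rw [hδ, hδ]; simp only [Category.assoc]
      _ = actmap (𝟙 x) (S.lunit S.I) ≫ actmap (𝟙 x) (S.tmap (𝟙 S.I) (S.lunit S.I)) ≫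
            a2 x S.I (S.t S.I S.I) ≫ a2 (act x S.I) S.I S.I := by
          rw [n1, Category.assoc]
      _ = actmap (𝟙 x) (S.lunit S.I ≫ S.tmap (𝟙 S.I) (S.lunit S.I) ≫ S.assoc S.I S.I S.I) ≫
            a2 x (S.t S.I S.I) S.I ≫ actmap (a2 x S.I S.I) (𝟙 S.I) := by
          rw [hA.ola1, ← c1, ← c1]; simp only [Category.assoc]
      _ = actmap (𝟙 x) (S.lunit S.I) ≫ (actmap (𝟙 x) (S.tmap (S.lunit S.I) (𝟙 S.I)) ≫
            a2 x (S.t S.I S.I) S.I) ≫ actmap (a2 x S.I S.I) (𝟙 S.I) := by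
          rw [hl, ← c1]; simp only [Category.assoc]
      _ = δ x ≫ actmap (δ x) (𝟙 S.I) := by
          rw [hA.a2_natural, hδ, n2]; simp only [Category.assoc]
  · intro x
    rw [hδ, Category.assoc, hA.ola2, c1, S.skm5, hA.actmap_id]
  · intro x
    rw [hδ, Category.assoc, hA.ola3]
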